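/- arXiv:1608.01129 — 2 statements merged into one kernel-verified Lean document; each statement's English description precedes it below -/
import Mathlib

section
/- Let b_n be a uniformly random bridge of length σ_n with σ_n → ∞, and let b_∞ be the uniform infinite bridge (the two-sided random walk with b_∞(0)=0 and i.i.d. increments P(b_∞(i)−b_∞(i−1)=k)=2^{−k−2} for k ∈ ℕ₀∪{−1}, i ≠ 0, and P(−b_∞(−1)=k)=(k+2)2^{−k−3}). If k_n ≤ σ_n and k_n = o(σ_n), then the total variation distance between the law of (b_n(σ_n−k_n),...,b_n(σ_n−1),b_n(0),...,b_n(k_n)) and the law of (b_∞(−k_n),...,b_∞(−1),b_∞(0),...,b_∞(k_n)) tends to 0 as n → ∞. -/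
open Filter

/-- A (discrete) bridge of length `σ`, encoded as a list of `σ+1` integer values:
`b 0 = 0`, each increment lies in `ℕ₀ ∪ {-1}` (i.e. is `≥ -1`), and the final value is `≤ 0`. -/
def IsBridge (σ : ℕ) (b : List ℤ) : Prop :=
  b.length = σ + 1 ∧ b.getD 0 0 = 0 ∧
    (∀ i < σ, -1 ≤ b.getD (i + 1) 0 - b.getD i 0) ∧ b.getD σ 0 ≤ 0

/-- The window `(b(σ-k), ..., b(σ-1), b(0), b(1), ..., b(k))` of a bridge of length `σ`. -/
def windowB (σ k : ℕ) (b : List ℤ) : List ℤ :=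
  ((List.range k).map fun i => b.getD (σ - k + i) 0) ++
    ((List.range (k + 1)).map fun i => b.getD i 0)

/-- Step law of the uniform infinite bridge away from the origin: `P(increment = j) = 2^{-j-2}`
for `j ∈ ℕ₀ ∪ {-1}`. -/
noncomputable def qstep (j : ℤ) : ℝ := if -1 ≤ j then (2 : ℝ) ^ (-j - 2) else 0

/-- Law of `-b_∞(-1)`, i.e. of the step from `b_∞(-1)` to `b_∞(0) = 0`:
`P(-b_∞(-1) = m) = (m+2)·2^{-m-3}` for `m ∈ ℕ₀ ∪ {-1}`. -/
noncomputable def qzero (m : ℤ) : ℝ :=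
  if -1 ≤ m then ((m : ℝ) + 2) * (2 : ℝ) ^ (-m - 3) else 0

/-- The law of the window `(b_∞(-k), ..., b_∞(0), ..., b_∞(k))` of the uniform infinite bridge:
value `0` at position `0` (index `k`), independent increments with law `qstep`, except the
step onto position `0` which has law `qzero`. -/
noncomputable def infBridgeLaw (k : ℕ) (w : List ℤ) : ℝ :=
  if w.length = 2 * k + 1 ∧ w.getD k 0 = 0 then
    ∏ j ∈ Finset.range (2 * k),
      if j = k - 1 then qzero (w.getD (j + 1) 0 - w.getD j 0)
      else qstep (w.getD (j + 1) 0 - w.getD j 0)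
  else 0

/-- The law of the window of a uniformly random bridge of length `σ`. -/
noncomputable def bridgeWindowLaw (σ k : ℕ) (w : List ℤ) : ℝ :=
  (Nat.card {b : List ℤ // IsBridge σ b ∧ windowB σ k b = w} : ℝ) /
    (Nat.card {b : List ℤ // IsBridge σ b} : ℝ)

/-!
A bridge of length `σ` is the same as a composition of `σ` into `σ + 1` nonnegative parts: its
increments raised by one, completed by the part `-b(σ)`. Hence there are at most `C(2σ, σ)` bridges.
A window with `2k` raised increments of sum `T` leaves free the `σ - 2k` increments of the bridge
outside the window, and prescribes on the step onto position `0` only the sum of the last increment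
of the bridge and of its final jump. If that step is `z`, then at least
`(z + 1) * C(2σ - T - (2k + 1), σ - T)` bridges have the window. Comparing the two binomial
coefficients shows that the finite law is pointwise at least the infinite one times
`1 - (T - (2k + 1))² / σ`. Under the infinite law `T` is a sum of independent negative binomial
variables, with mean `2k + 1` and variance `4k + 2`, so the total variation distance is at most
`(4k + 2) / σ`.
-/

theorem half_tsum_abs_sub_le {α : Type*} {p q δ : α → ℝ} {s D : ℝ} (hp : HasSum p s)
    (hq : HasSum q s) (hδ : HasSum δ D) (hδ_nonneg : ∀ a, 0 ≤ δ a) (h : ∀ a, q a - δ a ≤ p a) :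
    1 / 2 * ∑' a, |p a - q a| ≤ D := by
  have hle (a : α) : |p a - q a| ≤ p a - q a + 2 * δ a :=
    abs_le.2 ⟨by linarith [h a], by linarith [hδ_nonneg a]⟩
  have hsum : HasSum (fun a => p a - q a + 2 * δ a) (2 * D) := by
    simpa only [sub_self, zero_add] using (hp.sub hq).add (hδ.mul_left 2)
  have habs : Summable fun a => |p a - q a| :=
    .of_nonneg_of_le (fun _ => abs_nonneg _) hle hsum.summable
  linarith [habs.tsum_le_tsum hle hsum.summable, hsum.tsum_eq]

theorem hasSum_natCard_fiber {α β : Type*} [Finite β] (f : β → α) :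
    HasSum (fun a => (Nat.card {b // f b = a} : ℝ)) (Nat.card β) := by
  have := Fintype.ofFinite β
  have hone : HasSum (fun _ : β => (1 : ℝ)) (Nat.card β) := by
    simpa using hasSum_fintype fun _ : β => (1 : ℝ)
  refine ((Equiv.sigmaFiberEquiv f).hasSum_iff.2 hone).sigma fun a => ?_
  have := Fintype.ofFinite {b // f b = a}
  simpa using hasSum_fintype fun _ : {b // f b = a} => (1 : ℝ)

/-! ### Mean and variance of independent sums -/

/-- The weights `f` have total mass `1`, and under them `X` has mean `μ` and variance `v`. The
moments are stated with `HasSum`, so that their convergence is included. -/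
structure HasMeanVar {α : Type*} (f X : α → ℝ) (μ v : ℝ) : Prop where
  mass : HasSum f 1
  mean : HasSum (fun a => f a * (X a - μ)) 0
  variance : HasSum (fun a => f a * (X a - μ) ^ 2) v

namespace HasMeanVar

variable {α β : Type*} {f X : α → ℝ} {g Y : β → ℝ} {μ ν v w : ℝ}

theorem congr {f' X' : α → ℝ} (h : HasMeanVar f X μ v) (hf : ∀ a, f' a = f a)
    (hX : ∀ a, X' a = X a) : HasMeanVar f' X' μ v := by
  rwa [funext hf, funext hX]

theorem add_const (h : HasMeanVar f X μ v) (c : ℝ) :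
    HasMeanVar f (fun a => X a + c) (μ + c) v := by
  constructor <;> simp only [add_sub_add_right_eq_sub, h.mass, h.mean, h.variance]

theorem comp_iff {φ : β → α} (hφ : φ.Injective) (hf : ∀ a ∉ Set.range φ, f a = 0) :
    HasMeanVar (f ∘ φ) (X ∘ φ) μ v ↔ HasMeanVar f X μ v := by
  have hsum (u : α → ℝ) (s : ℝ) :
      HasSum (fun b => f (φ b) * u (φ b)) s ↔ HasSum (fun a => f a * u a) s :=
    hφ.hasSum_iff (f := fun a => f a * u a) fun a ha => by rw [hf a ha, zero_mul]
  have hmass := hφ.hasSum_iff (a := 1) hf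
  have hmean := hsum (fun a => X a - μ) 0
  have hvariance := hsum (fun a => (X a - μ) ^ 2) v
  exact ⟨fun h => ⟨hmass.1 h.mass, hmean.1 h.mean, hvariance.1 h.variance⟩,
    fun h => ⟨hmass.2 h.mass, hmean.2 h.mean, hvariance.2 h.variance⟩⟩

theorem prod (hf : HasMeanVar f X μ v) (hg : HasMeanVar g Y ν w) :
    HasMeanVar (fun p : α × β => f p.1 * g p.2) (fun p => X p.1 + Y p.2) (μ + ν) (v + w) := by
  have hmul {a : α → ℝ} {b : β → ℝ} {s t : ℝ} (ha : HasSum a s) (hb : HasSum b t) :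
      HasSum (fun p : α × β => a p.1 * b p.2) (s * t) :=
    ha.mul hb (summable_mul_of_summable_norm ha.summable.norm hb.summable.norm)
  refine ⟨by simpa using hmul hf.mass hg.mass, ?_, ?_⟩
  · convert! (hmul hf.mean hg.mass).add (hmul hf.mass hg.mean) using 1
    · funext p; ring
    · ring
  · convert! ((hmul hf.variance hg.mass).add ((hmul hf.mean hg.mean).mul_left 2)).add
      (hmul hf.mass hg.variance) using 1
    · funext p; ring
    · ring

theorem pi {n : ℕ} {f X : Fin n → α → ℝ} {μ v : Fin n → ℝ}
    (h : ∀ i, HasMeanVar (f i) (X i) (μ i) (v i)) :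
    HasMeanVar (fun y : Fin n → α => ∏ i, f i (y i)) (fun y => ∑ i, X i (y i))
      (∑ i, μ i) (∑ i, v i) := by
  induction n with
  | zero => constructor <;> simp
  | succ n ih =>
    rw [Fin.sum_univ_succ, Fin.sum_univ_succ,
      ← comp_iff (Fin.consEquiv fun _ => α).injective fun y hy => (hy <| Equiv.surjective _ y).elim]
    refine ((h 0).prod (ih fun i => h i.succ)).congr (fun p => ?_) fun p => ?_
    · simp [Fin.consEquiv, Fin.prod_univ_succ]
    · simp [Fin.consEquiv, Fin.sum_univ_succ]

end HasMeanVar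

/-- The law of the number of tails before the `(r + 1)`-st head of a fair coin. -/
noncomputable def negBinomial (r x : ℕ) : ℝ := ((x + r).choose r : ℝ) * (1 / 2) ^ (x + (r + 1))

theorem add_one_mul_choose_add (x r : ℕ) :
    ((x : ℝ) + r + 1) * ((x + r).choose r : ℝ) = (r + 1) * ((x + (r + 1)).choose (r + 1) : ℝ) := by
  rw [mul_comm ((r : ℝ) + 1)]
  exact_mod_cast Nat.add_one_mul_choose_eq (x + r) r

theorem hasSum_negBinomial (r : ℕ) : HasSum (negBinomial r) 1 := by
  convert! (hasSum_choose_mul_geometric_of_norm_lt_one r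
    (r := (1 / 2 : ℝ)) (by norm_num)).mul_right ((1 / 2) ^ (r + 1)) using 1
  · funext x
    rw [negBinomial, pow_add]
    ring
  · norm_num

theorem add_one_mul_negBinomial (x r : ℕ) :
    ((x : ℝ) + r + 1) * negBinomial r x = 2 * (r + 1) * negBinomial (r + 1) x := by
  rw [negBinomial, negBinomial, ← mul_assoc, add_one_mul_choose_add]
  ring

theorem hasMeanVar_negBinomial (r : ℕ) :
    HasMeanVar (negBinomial r) (↑) (r + 1) (2 * (r + 1)) := by
  have h0 := hasSum_negBinomial r
  have h1 := (hasSum_negBinomial (r + 1)).mul_left (2 * ((r : ℝ) + 1))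
  have h2 := (hasSum_negBinomial (r + 2)).mul_left (4 * ((r : ℝ) + 1) * (r + 2))
  have hrec (x : ℕ) := add_one_mul_negBinomial x r
  have hrec_succ (x : ℕ) := add_one_mul_negBinomial x (r + 1)
  push_cast at hrec_succ
  refine ⟨h0, ?_, ?_⟩
  · convert! h1.sub (h0.mul_left (2 * ((r : ℝ) + 1))) using 1
    · funext x
      linear_combination hrec x
    · ring
  · convert! (h2.sub (h1.mul_left (4 * (r : ℝ) + 5))).add (h0.mul_left (4 * ((r : ℝ) + 1) ^ 2))
      using 1
    · funext x
      linear_combination 2 * (r + 1) * hrec_succ x + ((x : ℝ) - 3 * r - 3) * hrec x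
    · ring

theorem prod_negBinomial {ι : Type*} (s : Finset ι) (r y : ι → ℕ) :
    ∏ i ∈ s, negBinomial (r i) (y i) =
      (∏ i ∈ s, ((y i + r i).choose (r i) : ℝ)) * (1 / 2) ^ (∑ i ∈ s, (y i + (r i + 1))) := by
  simp only [negBinomial, Finset.prod_mul_distrib, Finset.prod_pow_eq_pow_sum]

/-! ### Comparison of binomial coefficients -/

theorem antitone_centralBinom_div_four_pow :
    Antitone fun n : ℕ => (n.centralBinom : ℝ) / 4 ^ n := by
  refine antitone_nat_of_succ_le fun n => ?_
  rw [div_le_div_iff₀ (by positivity) (by positivity)]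
  have h : ((n : ℝ) + 1) * (n + 1).centralBinom = 2 * (2 * n + 1) * n.centralBinom := by
    exact_mod_cast Nat.succ_mul_centralBinom_succ n
  have h' : ((n + 1).centralBinom : ℝ) ≤ 4 * n.centralBinom := by
    refine le_of_mul_le_mul_left ?_ (by positivity : (0 : ℝ) < n + 1)
    rw [h]
    linarith [(Nat.cast_nonneg _ : (0 : ℝ) ≤ n.centralBinom)]
  calc _ ≤ 4 * n.centralBinom * (4 : ℝ) ^ n := by gcongr
    _ = _ := by ring

theorem choose_div_two_pow_eq_mul_succ (a b : ℕ) :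
    ((a + b).choose a : ℝ) / 2 ^ (a + b) =
      (1 - (b - (a + 1)) / (a + 1 + b)) * (((a + 1 + b).choose (a + 1) : ℝ) / 2 ^ (a + 1 + b)) := by
  have h : ((a : ℝ) + 1 + b) * ((a + b).choose a : ℝ) =
      ((a + 1 + b).choose (a + 1) : ℝ) * (a + 1) := by
    have := Nat.add_one_mul_choose_eq (a + b) a
    rw [add_right_comm] at this
    exact_mod_cast this
  have : (0 : ℝ) < a + 1 + b := by positivity
  rw [show (2 : ℝ) ^ (a + 1 + b) = 2 * 2 ^ (a + b) by ring]
  field_simp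
  linear_combination 2 * h

theorem one_sub_mul_centralBinom_le_choose_of_le {a b : ℕ} (hab : a ≤ b) :
    (1 - ((b : ℝ) - a) ^ 2 / (2 * (a + b))) * (b.centralBinom / 4 ^ b) ≤
      ((a + b).choose a : ℝ) / 2 ^ (a + b) := by
  induction hab using Nat.decreasingInduction with
  | self =>
    have h4 : (4 : ℝ) ^ b = 2 ^ (b + b) := by
      rw [← two_mul, pow_mul]
      norm_num
    simp [Nat.centralBinom, ← two_mul, h4]
  | of_succ a hab ih =>
    push_cast at ih
    have he : (0 : ℝ) ≤ b - (a + 1) := sub_nonneg.2 (by exact_mod_cast hab)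
    have hb : (0 : ℝ) < a + b := by exact_mod_cast (by omega : 0 < a + b)
    set e : ℝ := b - (a + 1) with he_def
    set L : ℝ := a + 1 + b
    have hLpos : 0 < L := by positivity
    have hratio : 0 ≤ 1 - e / L := sub_nonneg.2 ((div_le_one hLpos).2 (by linarith))
    have hsplit : (e + 1) ^ 2 / (2 * L) = e ^ 2 / (2 * L) + e / L + 1 / (2 * L) := by
      field_simp
      ring
    have hcross : 0 ≤ e / L * (e ^ 2 / (2 * L)) + 1 / (2 * L) := by positivity
    rw [choose_div_two_pow_eq_mul_succ, show (b : ℝ) - a = e + 1 by rw [he_def]; ring]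
    calc (1 - (e + 1) ^ 2 / (2 * (a + b))) * (b.centralBinom / 4 ^ b)
        ≤ (1 - (e + 1) ^ 2 / (2 * L)) * (b.centralBinom / 4 ^ b) := by
          gcongr
          linarith
      _ ≤ (1 - e / L) * (1 - e ^ 2 / (2 * L)) * (b.centralBinom / 4 ^ b) := by
          gcongr
          linarith
      _ ≤ _ := by
          rw [mul_assoc]
          gcongr

theorem one_sub_mul_centralBinom_le_choose {a b n : ℕ} (ha : a ≤ n) (hb : b ≤ n) :
    (1 - ((b : ℝ) - a) ^ 2 / (2 * (a + b))) * (n.centralBinom / 4 ^ n) ≤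
      ((a + b).choose a : ℝ) / 2 ^ (a + b) := by
  wlog hab : a ≤ b generalizing a b
  · have := this hb ha (le_of_not_ge hab)
    rwa [sub_sq_comm, add_comm (b : ℝ), add_comm b, ← Nat.choose_symm_add] at this
  rcases le_total (1 - ((b : ℝ) - a) ^ 2 / (2 * (a + b))) 0 with hneg | hpos
  · exact (mul_nonpos_of_nonpos_of_nonneg hneg (by positivity)).trans (by positivity)
  · exact (mul_le_mul_of_nonneg_left (antitone_centralBinom_div_four_pow hb) hpos).trans
      (one_sub_mul_centralBinom_le_choose_of_le hab)

theorem card_piAntidiag_nat {ι : Type*} [DecidableEq ι] (s : Finset ι) (n : ℕ) :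
    (s.piAntidiag n).card = s.card.multichoose n := by
  rw [← Finset.card_finsuppAntidiag_nat_eq_multichoose]
  simp [Finset.finsuppAntidiag]

/-! ### Bridges and compositions -/

/-- The walk started at `0` whose `j`-th increment is `z j - 1`. -/
def walk (z : ℕ → ℕ) (i : ℕ) : ℤ := ∑ j ∈ Finset.range i, ((z j : ℤ) - 1)

/-- The sequence `z` of which `u` is the walk, when the increments of `u` are at least `-1`;
smaller increments are truncated. -/
def stepsOf (u : ℕ → ℤ) (j : ℕ) : ℕ := (u (j + 1) - u j + 1).toNat

/-- The first `n` terms of `x` followed by `y`. -/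
def concat (n : ℕ) (x y : ℕ → ℕ) (j : ℕ) : ℕ := if j < n then x j else y (j - n)

section Walk

variable {z z' x y : ℕ → ℕ} {n i j : ℕ}

@[simp]
theorem walk_zero (z : ℕ → ℕ) : walk z 0 = 0 := rfl

theorem walk_succ (z : ℕ → ℕ) (i : ℕ) : walk z (i + 1) = walk z i + (z i - 1) :=
  Finset.sum_range_succ _ _

theorem walk_add (z : ℕ → ℕ) (n i : ℕ) :
    walk z (n + i) = walk z n + walk (fun j => z (n + j)) i :=
  Finset.sum_range_add _ _ _

theorem walk_eq_sum_sub (z : ℕ → ℕ) (n : ℕ) :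
    walk z n = (∑ j ∈ Finset.range n, z j : ℕ) - n := by
  simp [walk]

theorem walk_congr (h : ∀ j < i, z j = z' j) : walk z i = walk z' i :=
  Finset.sum_congr rfl fun j hj => by rw [h j (Finset.mem_range.1 hj)]

theorem walk_update_of_le {a : ℕ} (hi : i ≤ n) : walk (Function.update z n a) i = walk z i :=
  walk_congr fun _ hj => Function.update_of_ne (by omega) a z

theorem walk_update_add_one (z : ℕ → ℕ) (n a : ℕ) :
    walk (Function.update z n a) (n + 1) = walk z (n + 1) + a - z n := by
  rw [walk_succ, walk_succ, walk_update_of_le le_rfl, Function.update_self]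
  ring

theorem eq_of_walk_eq (h : ∀ i ≤ n, walk z i = walk z' i) (hj : j < n) : z j = z' j := by
  have hsucc := h (j + 1) hj
  rw [walk_succ, walk_succ, h j hj.le] at hsucc
  omega

theorem walk_stepsOf {u : ℕ → ℤ} (hu : ∀ j < n, -1 ≤ u (j + 1) - u j) (hi : i ≤ n) :
    walk (stepsOf u) i = u i - u 0 := by
  have hstep (j : ℕ) (hj : j ∈ Finset.range i) : (stepsOf u j : ℤ) - 1 = u (j + 1) - u j := by
    have := hu j ((Finset.mem_range.1 hj).trans_le hi)
    rw [stepsOf]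
    omega
  rw [walk, Finset.sum_congr rfl hstep, Finset.sum_range_sub]

theorem concat_of_lt (hj : j < n) : concat n x y j = x j := if_pos hj

theorem concat_add (n : ℕ) (x y : ℕ → ℕ) (j : ℕ) : concat n x y (n + j) = y j := by
  simp [concat]

theorem walk_concat_of_le (hi : i ≤ n) : walk (concat n x y) i = walk x i :=
  walk_congr fun _ hj => concat_of_lt (hj.trans_le hi)

theorem walk_concat_add (n : ℕ) (x y : ℕ → ℕ) (i : ℕ) :
    walk (concat n x y) (n + i) = walk x n + walk y i := by
  simp only [walk_add, walk_concat_of_le le_rfl, concat_add]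

end Walk

theorem getD_map_range {α : Type*} (f : ℕ → α) (d : α) {n i : ℕ} (hi : i < n) :
    ((List.range n).map f).getD i d = f i := by
  simp [List.getD_eq_getElem?_getD, hi]

theorem map_range_eq_iff_getD {α : Type*} {l : List α} {n : ℕ} (hl : l.length = n) (f : ℕ → α)
    (d : α) : (List.range n).map f = l ↔ ∀ i < n, f i = l.getD i d := by
  subst hl
  refine ⟨fun h i hi => by rw [← h, getD_map_range f d hi], fun h => ?_⟩
  refine List.ext_getElem (by simp) fun i _ hi => ?_
  simp [h i hi, List.getD_eq_getElem?_getD, hi]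

/-- The values at times `0, …, n` of the walk with steps `z`. -/
def walkList (n : ℕ) (z : ℕ → ℕ) : List ℤ := (List.range (n + 1)).map (walk z)

theorem getD_walkList {n i : ℕ} (z : ℕ → ℕ) (hi : i ≤ n) : (walkList n z).getD i 0 = walk z i :=
  getD_map_range _ _ (Nat.lt_succ_of_le hi)

theorem isBridge_walkList {σ : ℕ} {z : ℕ → ℕ} (h : walk z σ ≤ 0) : IsBridge σ (walkList σ z) := by
  refine ⟨by simp [walkList], getD_walkList z σ.zero_le, fun i hi => ?_, ?_⟩
  · rw [getD_walkList z hi, getD_walkList z hi.le, walk_succ]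
    omega
  · rwa [getD_walkList z le_rfl]

/-- The steps of a bridge of length `σ` continued after time `σ` by first descending from `b σ` to
`-1` in a single increment and then by increments `-1`; these steps vanish after time `σ`. -/
def bridgeSteps (σ : ℕ) (b : List ℤ) : ℕ → ℕ :=
  stepsOf fun i => if i ≤ σ then b.getD i 0 else (σ : ℤ) - i

namespace IsBridge

variable {σ : ℕ} {b : List ℤ}

theorem walk_bridgeSteps (hb : IsBridge σ b) (i : ℕ) :
    walk (bridgeSteps σ b) i = if i ≤ σ then b.getD i 0 else (σ : ℤ) - i := by
  obtain ⟨-, hzero, hincr, hlast⟩ := hb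
  rw [bridgeSteps, walk_stepsOf (n := i) (fun j _ => ?_) le_rfl, if_pos σ.zero_le, hzero, sub_zero]
  rcases lt_trichotomy j σ with hj | rfl | hj
  · rw [if_pos (show j + 1 ≤ σ from hj), if_pos hj.le]
    exact hincr j hj
  · rw [if_neg (by omega), if_pos le_rfl]
    push_cast
    omega
  · rw [if_neg (by omega), if_neg (by omega)]
    push_cast
    omega

theorem walkList_bridgeSteps (hb : IsBridge σ b) : walkList σ (bridgeSteps σ b) = b :=
  (map_range_eq_iff_getD hb.1 _ 0).2 fun i hi => by
    rw [hb.walk_bridgeSteps, if_pos (Nat.le_of_lt_succ hi)]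

theorem bridgeSteps_mem_piAntidiag (hb : IsBridge σ b) :
    bridgeSteps σ b ∈ (Finset.range (σ + 1)).piAntidiag σ := by
  refine Finset.mem_piAntidiag.2 ⟨?_, fun j hj => ?_⟩
  · have h := walk_eq_sum_sub (bridgeSteps σ b) (σ + 1)
    rw [hb.walk_bridgeSteps, if_neg (by omega)] at h
    push_cast at h
    zify
    linarith
  · by_contra hlt
    rw [Finset.mem_range, not_lt] at hlt
    refine hj ?_
    rw [bridgeSteps, stepsOf, if_neg (by omega), if_neg (by omega)]
    push_cast
    omega

end IsBridge

/-- The composition of `σ` into `σ + 1` parts encoding a bridge of length `σ`. -/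
def bridgeComposition (σ : ℕ) (b : {b : List ℤ // IsBridge σ b}) :
    (Finset.range (σ + 1)).piAntidiag σ :=
  ⟨bridgeSteps σ b, b.2.bridgeSteps_mem_piAntidiag⟩

theorem bridgeComposition_injective (σ : ℕ) : (bridgeComposition σ).Injective := fun b b' h => by
  have hsteps : bridgeSteps σ b = bridgeSteps σ b' := congrArg Subtype.val h
  rw [Subtype.ext_iff, ← b.2.walkList_bridgeSteps, hsteps, b'.2.walkList_bridgeSteps]

instance finite_isBridge (σ : ℕ) : Finite {b : List ℤ // IsBridge σ b} :=
  .of_injective _ (bridgeComposition_injective σ)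

instance nonempty_isBridge (σ : ℕ) : Nonempty {b : List ℤ // IsBridge σ b} :=
  ⟨walkList σ 0, isBridge_walkList (by simp [walk])⟩

theorem natCard_isBridge_le (σ : ℕ) : Nat.card {b : List ℤ // IsBridge σ b} ≤ σ.centralBinom := by
  refine (Nat.card_le_card_of_injective _ (bridgeComposition_injective σ)).trans_eq ?_
  rw [Nat.card_eq_fintype_card, Fintype.card_coe, card_piAntidiag_nat, Finset.card_range,
    Nat.multichoose_eq, Nat.centralBinom]
  congr 1
  omega

theorem bridgeWindowLaw_nonneg (σ k : ℕ) (w : List ℤ) : 0 ≤ bridgeWindowLaw σ k w := by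
  unfold bridgeWindowLaw
  positivity

theorem hasSum_bridgeWindowLaw (σ k : ℕ) : HasSum (bridgeWindowLaw σ k) 1 := by
  have hfiber (w : List ℤ) : Nat.card {b : List ℤ // IsBridge σ b ∧ windowB σ k b = w} =
      Nat.card {b : {b : List ℤ // IsBridge σ b} // windowB σ k b = w} :=
    Nat.card_congr (Equiv.subtypeSubtypeEquivSubtypeInter (IsBridge σ) (windowB σ k · = w)).symm
  have hcard : (Nat.card {b : List ℤ // IsBridge σ b} : ℝ) ≠ 0 := mod_cast Nat.card_pos.ne'
  have h := (hasSum_natCard_fiber fun b : {b : List ℤ // IsBridge σ b} =>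
    windowB σ k b).div_const (Nat.card {b : List ℤ // IsBridge σ b} : ℝ)
  simp only [← hfiber, div_self hcard] at h
  exact h

/-- The list of length `2 * k + 1` with increments `z j - 1` and value `0` at the middle
index `k`. -/
def windowOfSteps (k : ℕ) (z : ℕ → ℕ) : List ℤ :=
  (List.range (2 * k + 1)).map fun i => walk z i - walk z k

theorem getD_windowOfSteps {k i : ℕ} (z : ℕ → ℕ) (hi : i ≤ 2 * k) :
    (windowOfSteps k z).getD i 0 = walk z i - walk z k :=
  getD_map_range _ _ (Nat.lt_succ_of_le hi)

theorem windowOfSteps_eq_iff {k : ℕ} {z z' : ℕ → ℕ} :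
    windowOfSteps k z = windowOfSteps k z' ↔ ∀ j < 2 * k, z j = z' j := by
  rw [windowOfSteps, windowOfSteps, List.map_inj_left]
  simp only [List.mem_range, Nat.lt_succ_iff]
  refine ⟨fun h j hj => eq_of_walk_eq (n := 2 * k) (fun i hi => ?_) hj, fun h i hi => ?_⟩
  · have h0 := h 0 (Nat.zero_le _)
    rw [walk_zero, walk_zero] at h0
    linarith [h i hi]
  · rw [walk_congr fun j hj => h j (by omega), walk_congr (i := k) fun j hj => h j (by omega)]

theorem windowB_walkList {σ k : ℕ} (hkσ : k ≤ σ) {x z : ℕ → ℕ}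
    (hleft : ∀ i < k, walk x (σ - k + i) = walk z i - walk z k)
    (hright : ∀ i ≤ k, walk x i = walk z (k + i) - walk z k) :
    windowB σ k (walkList σ x) = windowOfSteps k z := by
  have hrange : List.range (2 * k + 1) = List.range k ++ (List.range (k + 1)).map (k + ·) := by
    rw [← List.range_add, two_mul, add_assoc]
  rw [windowB, windowOfSteps, hrange, List.map_append, List.map_map]
  congr 1 <;> refine List.map_congr_left fun i hi => ?_ <;> rw [List.mem_range] at hi
  · rw [getD_walkList x (by omega), hleft i hi]
  · rw [getD_walkList x (by omega), hright i (by omega), Function.comp_apply]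

/-- The steps of a bridge of length `2 * k + m` whose window has steps `z`: the second half of `z`,
then `m` steps taken from `g`, then the first half of `z`, with its last step replaced by `a`. -/
def bridgeStepsOfWindow (k m : ℕ) (z g : ℕ → ℕ) (a : ℕ) : ℕ → ℕ :=
  concat k (fun j => z (k + j)) (concat m g (Function.update z (k - 1) a))

section BridgeStepsOfWindow

variable {k m a i : ℕ} {z g : ℕ → ℕ}

theorem walk_bridgeStepsOfWindow_of_le (hi : i ≤ k) :
    walk (bridgeStepsOfWindow k m z g a) i = walk z (k + i) - walk z k := by
  rw [bridgeStepsOfWindow, walk_concat_of_le hi, walk_add, add_sub_cancel_left]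

theorem walk_bridgeStepsOfWindow_add (hg : walk z (2 * k) + walk g m = 0) (i : ℕ) :
    walk (bridgeStepsOfWindow k m z g a) (k + (m + i)) =
      walk (Function.update z (k - 1) a) i - walk z k := by
  rw [two_mul, walk_add] at hg
  rw [bridgeStepsOfWindow, walk_concat_add, walk_concat_add]
  linarith

theorem isBridge_bridgeStepsOfWindow (hk : 0 < k) (hg : walk z (2 * k) + walk g m = 0)
    (ha : a ≤ z (k - 1)) :
    IsBridge (2 * k + m) (walkList (2 * k + m) (bridgeStepsOfWindow k m z g a)) := by
  refine isBridge_walkList ?_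
  obtain ⟨n, rfl⟩ : ∃ n, k = n + 1 := ⟨k - 1, by omega⟩
  rw [show 2 * (n + 1) + m = n + 1 + (m + (n + 1)) by ring, walk_bridgeStepsOfWindow_add hg,
    Nat.add_sub_cancel, walk_update_add_one]
  rw [Nat.add_sub_cancel] at ha
  omega

theorem windowB_bridgeStepsOfWindow (hg : walk z (2 * k) + walk g m = 0) :
    windowB (2 * k + m) k (walkList (2 * k + m) (bridgeStepsOfWindow k m z g a)) =
      windowOfSteps k z := by
  refine windowB_walkList (by omega) (fun i hi => ?_) fun i => walk_bridgeStepsOfWindow_of_le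
  rw [show 2 * k + m - k + i = k + (m + i) by omega, walk_bridgeStepsOfWindow_add hg,
    walk_update_of_le (by omega)]

theorem bridgeStepsOfWindow_inj {a' : ℕ} {g' : ℕ → ℕ} (hk : 0 < k)
    (h : walkList (2 * k + m) (bridgeStepsOfWindow k m z g a) =
      walkList (2 * k + m) (bridgeStepsOfWindow k m z g' a')) :
    a = a' ∧ ∀ j < m, g j = g' j := by
  have hstep {j : ℕ} (hj : j < 2 * k + m) :
      bridgeStepsOfWindow k m z g a j = bridgeStepsOfWindow k m z g' a' j :=
    eq_of_walk_eq (fun i hi => List.map_inj_left.1 h i (List.mem_range.2 (by omega))) hj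
  constructor
  · simpa [bridgeStepsOfWindow, concat_add] using hstep (j := k + (m + (k - 1))) (by omega)
  · intro j hj
    simpa [bridgeStepsOfWindow, concat_add, concat_of_lt hj] using hstep (j := k + j) (by omega)

end BridgeStepsOfWindow

theorem mul_multichoose_le_natCard_isBridge_windowB {k m : ℕ} (hk : 0 < k) (z : ℕ → ℕ)
    (hz : ∑ j ∈ Finset.range (2 * k), z j ≤ 2 * k + m) :
    (z (k - 1) + 1) * m.multichoose (2 * k + m - ∑ j ∈ Finset.range (2 * k), z j) ≤
      Nat.card {b : List ℤ // IsBridge (2 * k + m) b ∧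
        windowB (2 * k + m) k b = windowOfSteps k z} := by
  set T := ∑ j ∈ Finset.range (2 * k), z j
  set σ := 2 * k + m
  let middles := (Finset.range m).piAntidiag (σ - T)
  have hfin : Finite {b : List ℤ // IsBridge σ b ∧ windowB σ k b = windowOfSteps k z} :=
    .of_injective (fun b => (⟨b.1, b.2.1⟩ : {b : List ℤ // IsBridge σ b}))
      fun _ _ h => Subtype.ext (Subtype.mk.inj h)
  have hg (g : middles) : walk z (2 * k) + walk g m = 0 := by
    rw [walk_eq_sum_sub, walk_eq_sum_sub, (Finset.mem_piAntidiag.1 g.2).1]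
    omega
  let glue (p : Fin (z (k - 1) + 1) × middles) :
      {b : List ℤ // IsBridge σ b ∧ windowB σ k b = windowOfSteps k z} :=
    ⟨walkList σ (bridgeStepsOfWindow k m z p.2 p.1),
      isBridge_bridgeStepsOfWindow hk (hg p.2) (Nat.le_of_lt_succ p.1.2),
      windowB_bridgeStepsOfWindow (hg p.2)⟩
  have hglue : glue.Injective := by
    rintro ⟨a, g⟩ ⟨a', g'⟩ h
    obtain ⟨ha, hmid⟩ := bridgeStepsOfWindow_inj hk (congrArg Subtype.val h)
    refine Prod.ext (Fin.ext ha) (Subtype.ext (funext fun j => ?_))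
    by_cases hj : j < m
    · exact hmid j hj
    · have hsupp (g : middles) : g.1 j = 0 :=
        not_not.1 fun hne => hj (Finset.mem_range.1 ((Finset.mem_piAntidiag.1 g.2).2 j hne))
      rw [hsupp, hsupp]
  have hcard := Nat.card_le_card_of_injective glue hglue
  rwa [Nat.card_prod, Nat.card_eq_fintype_card, Nat.card_eq_fintype_card, Fintype.card_fin,
    Fintype.card_coe, card_piAntidiag_nat, Finset.card_range] at hcard

/-! ### The uniform infinite bridge -/

theorem qstep_natCast_sub_one (x : ℕ) : qstep (x - 1) = negBinomial 0 x := by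
  rw [qstep, if_pos (by omega), negBinomial, show -((x : ℤ) - 1) - 2 = -((x + 1 : ℕ) : ℤ) by
    push_cast; ring, zpow_neg, zpow_natCast, one_div, inv_pow]
  simp

theorem qzero_natCast_sub_one (x : ℕ) : qzero (x - 1) = negBinomial 1 x := by
  rw [qzero, if_pos (by omega), negBinomial, show -((x : ℤ) - 1) - 3 = -((x + 2 : ℕ) : ℤ) by
    push_cast; ring, zpow_neg, zpow_natCast, one_div, inv_pow, Nat.choose_one_right]
  push_cast
  ring

theorem qstep_nonneg (j : ℤ) : 0 ≤ qstep j := by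
  unfold qstep
  split_ifs <;> positivity

theorem qzero_nonneg (j : ℤ) : 0 ≤ qzero j := by
  unfold qzero
  split_ifs with hj
  · have : (-1 : ℝ) ≤ j := mod_cast hj
    exact mul_nonneg (by linarith) (by positivity)
  · exact le_rfl

theorem infBridgeLaw_nonneg (k : ℕ) (w : List ℤ) : 0 ≤ infBridgeLaw k w := by
  unfold infBridgeLaw
  split_ifs
  · refine Finset.prod_nonneg fun j _ => ?_
    split_ifs
    exacts [qzero_nonneg _, qstep_nonneg _]
  · exact le_rfl

theorem infBridgeLaw_windowOfSteps (k : ℕ) (z : ℕ → ℕ) :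
    infBridgeLaw k (windowOfSteps k z) =
      ∏ j ∈ Finset.range (2 * k), negBinomial (if j = k - 1 then 1 else 0) (z j) := by
  rw [infBridgeLaw, if_pos ⟨by simp [windowOfSteps], by
    rw [getD_windowOfSteps z (by omega), sub_self]⟩]
  refine Finset.prod_congr rfl fun j hj => ?_
  rw [Finset.mem_range] at hj
  rw [getD_windowOfSteps z hj, getD_windowOfSteps z hj.le, walk_succ,
    show walk z j + (z j - 1) - walk z k - (walk z j - walk z k) = z j - 1 by ring]
  split_ifs with h
  · exact qzero_natCast_sub_one _
  · exact qstep_natCast_sub_one _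

theorem infBridgeLaw_windowOfSteps_of_pos {k : ℕ} (hk : 0 < k) (z : ℕ → ℕ) :
    infBridgeLaw k (windowOfSteps k z) =
      (z (k - 1) + 1) * (1 / 2) ^ (∑ j ∈ Finset.range (2 * k), z j + (2 * k + 1)) := by
  have hmem : k - 1 ∈ Finset.range (2 * k) := Finset.mem_range.2 (by omega)
  have hchoose (j : ℕ) (_ : j ∈ Finset.range (2 * k)) (hj : j ≠ k - 1) :
      (((z j + if j = k - 1 then 1 else 0).choose (if j = k - 1 then 1 else 0) : ℕ) : ℝ) = 1 := by
    rw [if_neg hj, Nat.choose_zero_right, Nat.cast_one]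
  have hexp : ∑ j ∈ Finset.range (2 * k), (z j + ((if j = k - 1 then 1 else 0) + 1)) =
      ∑ j ∈ Finset.range (2 * k), z j + (2 * k + 1) := by
    rw [Finset.sum_add_distrib, Finset.sum_add_distrib, Finset.sum_ite_eq', if_pos hmem,
      Finset.sum_const, Finset.card_range, smul_eq_mul, mul_one, add_comm 1]
  rw [infBridgeLaw_windowOfSteps, prod_negBinomial, hexp,
    Finset.prod_eq_single_of_mem _ hmem hchoose, if_pos rfl, Nat.choose_one_right]
  push_cast
  rfl

theorem eq_windowOfSteps_of_infBridgeLaw_ne_zero {k : ℕ} {w : List ℤ}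
    (hw : infBridgeLaw k w ≠ 0) : w = windowOfSteps k (stepsOf (w.getD · 0)) := by
  unfold infBridgeLaw at hw
  obtain ⟨⟨hlength, hmiddle⟩, hprod⟩ := ite_ne_right_iff.1 hw
  have hincr (j : ℕ) (hj : j < 2 * k) : -1 ≤ w.getD (j + 1) 0 - w.getD j 0 := by
    by_contra hlt
    refine Finset.prod_ne_zero_iff.1 hprod j (Finset.mem_range.2 hj) ?_
    rw [qzero, qstep, if_neg hlt, if_neg hlt, ite_self]
  refine ((map_range_eq_iff_getD hlength _ 0).2 fun i hi => ?_).symm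
  rw [walk_stepsOf hincr (by omega), walk_stepsOf hincr (by omega), hmiddle]
  ring

/-- The window with the `2 * k` steps `y`. -/
noncomputable def windowOfFinSteps (k : ℕ) (y : Fin (2 * k) → ℕ) : List ℤ :=
  windowOfSteps k (Function.extend Fin.val y 0)

theorem windowOfFinSteps_restrict (k : ℕ) (z : ℕ → ℕ) :
    windowOfFinSteps k (fun j => z j) = windowOfSteps k z :=
  windowOfSteps_eq_iff.2 fun j hj => Fin.val_injective.extend_apply _ _ (⟨j, hj⟩ : Fin (2 * k))

theorem windowOfFinSteps_injective (k : ℕ) : (windowOfFinSteps k).Injective := fun y y' h => by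
  funext j
  simpa only [Fin.val_injective.extend_apply] using windowOfSteps_eq_iff.1 h j j.2

theorem hasMeanVar_infBridgeLaw {k : ℕ} (hk : 0 < k) :
    HasMeanVar (infBridgeLaw k) (fun w => ((w.getD (2 * k) 0 - w.getD 0 0 : ℤ) : ℝ))
      1 (4 * k + 2) := by
  have hsum : ∑ j : Fin (2 * k), (((if (j : ℕ) = k - 1 then 1 else 0 : ℕ) : ℝ) + 1) =
      2 * k + 1 := by
    rw [Fin.sum_univ_eq_sum_range fun j => ((if j = k - 1 then 1 else 0 : ℕ) : ℝ) + 1,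
      Finset.sum_add_distrib, ← Nat.cast_sum, Finset.sum_ite_eq',
      if_pos (Finset.mem_range.2 (by omega)), Finset.sum_const, Finset.card_range, nsmul_one]
    push_cast
    ring
  have h := (HasMeanVar.pi fun j : Fin (2 * k) =>
    hasMeanVar_negBinomial (if (j : ℕ) = k - 1 then 1 else 0)).add_const (-(2 * k))
  rw [← Finset.mul_sum, hsum] at h
  rw [← HasMeanVar.comp_iff (windowOfFinSteps_injective k) fun w hw => by_contra fun hne => hw
    ⟨_, (windowOfFinSteps_restrict k _).trans (eq_windowOfSteps_of_infBridgeLaw_ne_zero hne).symm⟩]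
  convert! h.congr (fun y => ?_) fun y => ?_ using 1
  · ring
  · ring
  · rw [Function.comp_apply, windowOfFinSteps, infBridgeLaw_windowOfSteps, Finset.prod_range]
    simp only [Fin.val_injective.extend_apply]
  · rw [Function.comp_apply, windowOfFinSteps, getD_windowOfSteps _ le_rfl,
      getD_windowOfSteps _ (Nat.zero_le _), walk_zero, walk_eq_sum_sub, Finset.sum_range]
    simp only [Fin.val_injective.extend_apply]
    push_cast
    ring

theorem one_sub_mul_natCard_isBridge_le_choose {σ a b : ℕ} (hσ : 0 < σ) (ha : a ≤ σ) (hb : b ≤ σ)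
    (hab : σ ≤ 2 * (a + b)) :
    (1 - ((b : ℝ) - a) ^ 2 / σ) * (Nat.card {b : List ℤ // IsBridge σ b} / 4 ^ σ) ≤
      ((a + b).choose a : ℝ) / 2 ^ (a + b) := by
  rcases le_total (1 - ((b : ℝ) - a) ^ 2 / σ) 0 with hneg | hpos
  · exact (mul_nonpos_of_nonpos_of_nonneg hneg (by positivity)).trans (by positivity)
  have hdiv : ((b : ℝ) - a) ^ 2 / (2 * (a + b)) ≤ ((b : ℝ) - a) ^ 2 / σ :=
    div_le_div_of_nonneg_left (sq_nonneg _) (by exact_mod_cast hσ) (by exact_mod_cast hab)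
  calc (1 - ((b : ℝ) - a) ^ 2 / σ) * (Nat.card {b : List ℤ // IsBridge σ b} / 4 ^ σ)
      ≤ (1 - ((b : ℝ) - a) ^ 2 / σ) * (σ.centralBinom / 4 ^ σ) := by
        gcongr
        exact natCard_isBridge_le σ
    _ ≤ (1 - ((b : ℝ) - a) ^ 2 / (2 * (a + b))) * (σ.centralBinom / 4 ^ σ) := by gcongr
    _ ≤ _ := one_sub_mul_centralBinom_le_choose ha hb

theorem infBridgeLaw_mul_le_bridgeWindowLaw_windowOfSteps {σ k : ℕ} (hk : 0 < k)
    (hσ : 4 * k + 2 ≤ σ) (z : ℕ → ℕ) :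
    infBridgeLaw k (windowOfSteps k z) *
        (1 - ((∑ j ∈ Finset.range (2 * k), z j : ℕ) - (2 * k + 1 : ℝ)) ^ 2 / σ) ≤
      bridgeWindowLaw σ k (windowOfSteps k z) := by
  set T := ∑ j ∈ Finset.range (2 * k), z j with hT
  have hσpos : 0 < σ := by omega
  rcases lt_or_ge σ T with hlt | hle
  · have hσT : (σ : ℝ) + 1 ≤ T := mod_cast hlt
    have hkσ : 4 * (k : ℝ) + 2 ≤ σ := mod_cast hσ
    refine (mul_nonpos_of_nonneg_of_nonpos (infBridgeLaw_nonneg _ _) ?_).trans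
      (bridgeWindowLaw_nonneg _ _ _)
    rw [sub_nonpos, one_le_div (Nat.cast_pos.2 hσpos)]
    nlinarith
  obtain ⟨a, ha⟩ := Nat.exists_eq_add_of_le hle
  obtain ⟨b, hb⟩ := Nat.exists_eq_add_of_le (show 2 * k + 1 ≤ σ by omega)
  have hcount : (z (k - 1) + 1) * (a + b).choose a ≤
      Nat.card {b : List ℤ // IsBridge σ b ∧ windowB σ k b = windowOfSteps k z} := by
    have h := mul_multichoose_le_natCard_isBridge_windowB (m := b + 1) hk z (by omega)
    rwa [show 2 * k + (b + 1) = σ by omega, ← hT, show σ - T = a by omega, Nat.multichoose_eq,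
      show b + 1 + a - 1 = a + b by omega] at h
  have hdiff : (T : ℝ) - (2 * k + 1) = b - a := by
    have hTa : (σ : ℝ) = T + a := mod_cast ha
    have hkb : (σ : ℝ) = 2 * k + 1 + b := mod_cast hb
    linarith
  have hpow : (1 / 2 : ℝ) ^ (T + (2 * k + 1)) = 2 ^ (a + b) / 4 ^ σ := by
    have hexp : a + b + (T + (2 * k + 1)) = 2 * σ := by omega
    rw [one_div_pow, div_eq_div_iff (by positivity) (by positivity), one_mul, ← pow_add, hexp,
      pow_mul]
    norm_num
  rw [infBridgeLaw_windowOfSteps_of_pos hk, ← hT, hpow, hdiff, bridgeWindowLaw,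
    le_div_iff₀ (by exact_mod_cast Nat.card_pos)]
  calc _ = (z (k - 1) + 1) * 2 ^ (a + b) * ((1 - ((b : ℝ) - a) ^ 2 / σ) *
        (Nat.card {b : List ℤ // IsBridge σ b} / 4 ^ σ)) := by ring
    _ ≤ (z (k - 1) + 1) * 2 ^ (a + b) * (((a + b).choose a : ℝ) / 2 ^ (a + b)) := by
        gcongr
        exact one_sub_mul_natCard_isBridge_le_choose hσpos (by omega) (by omega) (by omega)
    _ = (z (k - 1) + 1) * ((a + b).choose a : ℝ) := by field_simp
    _ ≤ _ := by exact_mod_cast hcount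

theorem infBridgeLaw_mul_le_bridgeWindowLaw {σ k : ℕ} (hk : 0 < k) (hσ : 4 * k + 2 ≤ σ)
    (w : List ℤ) :
    infBridgeLaw k w * (1 - (((w.getD (2 * k) 0 - w.getD 0 0 : ℤ) : ℝ) - 1) ^ 2 / σ) ≤
      bridgeWindowLaw σ k w := by
  by_cases hw : infBridgeLaw k w = 0
  · rw [hw, zero_mul]
    exact bridgeWindowLaw_nonneg σ k w
  rw [eq_windowOfSteps_of_infBridgeLaw_ne_zero hw]
  generalize stepsOf (w.getD · 0) = z
  convert! infBridgeLaw_mul_le_bridgeWindowLaw_windowOfSteps hk hσ z using 5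
  rw [getD_windowOfSteps z le_rfl, getD_windowOfSteps z (Nat.zero_le _), walk_zero,
    walk_eq_sum_sub]
  push_cast
  ring

theorem infBridgeLaw_zero_left (w : List ℤ) : infBridgeLaw 0 w = if w = [0] then 1 else 0 := by
  have hw : w.length = 2 * 0 + 1 ∧ w.getD 0 0 = 0 ↔ w = [0] := by
    constructor
    · rintro ⟨hlength, hzero⟩
      obtain ⟨x, rfl⟩ := List.length_eq_one_iff.1 hlength
      exact congrArg (fun x => [x]) hzero
    · rintro rfl
      exact ⟨rfl, rfl⟩
  rw [infBridgeLaw, mul_zero, Finset.range_zero, Finset.prod_empty]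
  exact if_congr hw rfl rfl

theorem bridgeWindowLaw_zero_right (σ : ℕ) : bridgeWindowLaw σ 0 = infBridgeLaw 0 := by
  have hwindow {b : List ℤ} (hb : IsBridge σ b) : windowB σ 0 b = [0] :=
    congrArg (fun x => [x]) hb.2.1
  funext w
  rw [infBridgeLaw_zero_left, bridgeWindowLaw]
  split_ifs with hw
  · have hall (b : List ℤ) : IsBridge σ b ∧ windowB σ 0 b = w ↔ IsBridge σ b :=
      and_iff_left_of_imp fun hb => (hwindow hb).trans hw.symm
    simp only [hall]
    exact div_self (mod_cast Nat.card_pos.ne')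
  · have : IsEmpty {b : List ℤ // IsBridge σ b ∧ windowB σ 0 b = w} :=
      ⟨fun b => hw (b.2.2.symm.trans (hwindow b.2.1))⟩
    rw [Nat.card_of_isEmpty, Nat.cast_zero, zero_div]

theorem half_tsum_abs_bridgeWindowLaw_sub_infBridgeLaw_le {σ k : ℕ} (hσ : 4 * k + 2 ≤ σ) :
    1 / 2 * ∑' w, |bridgeWindowLaw σ k w - infBridgeLaw k w| ≤ (4 * k + 2) / σ := by
  rcases k.eq_zero_or_pos with rfl | hk
  · simp only [bridgeWindowLaw_zero_right, sub_self, abs_zero, tsum_zero, mul_zero]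
    positivity
  have hinf := hasMeanVar_infBridgeLaw hk
  refine half_tsum_abs_sub_le (hasSum_bridgeWindowLaw σ k) hinf.mass
    (hinf.variance.div_const (σ : ℝ)) (fun w => ?_) fun w => ?_
  · have := infBridgeLaw_nonneg k w
    positivity
  · refine (infBridgeLaw_mul_le_bridgeWindowLaw hk hσ w).trans_eq' ?_
    ring

/-- If `σ_n → ∞` and `k_n ≤ σ_n` with `k_n = o(σ_n)`, the total variation distance between the
law of the window `(b_n(σ_n-k_n),...,b_n(σ_n-1),b_n(0),...,b_n(k_n))` of a uniform bridge of
length `σ_n` and the law of the corresponding window of the uniform infinite bridge tends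
to `0` as `n → ∞`. -/
theorem bridge_window_tv (σ k : ℕ → ℕ) (hk : ∀ n, k n ≤ σ n)
    (hσ : Tendsto (fun n => (σ n : ℝ)) atTop atTop)
    (hsmall : Tendsto (fun n => (k n : ℝ) / (σ n : ℝ)) atTop (nhds 0)) :
    Tendsto (fun n => (1 / 2 : ℝ) *
        ∑' w : List ℤ, |bridgeWindowLaw (σ n) (k n) w - infBridgeLaw (k n) w|)
      atTop (nhds 0) := by
  have hbound : Tendsto (fun n => 4 * ((k n : ℝ) / σ n) + 2 / (σ n : ℝ)) atTop (nhds 0) := by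
    simpa using (hsmall.const_mul 4).add (tendsto_const_nhds.div_atTop hσ)
  refine squeeze_zero' (.of_forall fun n => by positivity) ?_ hbound
  filter_upwards [hσ.eventually_ge_atTop 4,
    hsmall.eventually_le_const (show (0 : ℝ) < 1 / 8 by norm_num)] with n hσn hkn
  rw [div_le_iff₀ (by linarith)] at hkn
  have hσk : 4 * k n + 2 ≤ σ n := by
    have : (4 : ℝ) * k n + 2 ≤ σ n := by linarith
    exact_mod_cast this
  exact (half_tsum_abs_bridgeWindowLaw_sub_infBridgeLaw_le hσk).trans_eq (by ring)
end

section
/- Radon–Nikodym limit for conditioned random-walk counts: let S be simple random walk, let σ_n, a_n, n be integer/real sequences with √n ≪ σ_n ≪ n and a_n ∼ 2√(θn/(3σ_n)) for some θ > 0, and set s_n = ⌊(3/2)s a_n²⌋ for fixed s > 0. If v_n ≤ c a_n⁴ for a fixed constant c, x_n = σ_n − 2s_n, y_n = 2(n − v_n) + σ_n − 2s_n, then P(S(y_n) = x_n)/P(S(2n+σ_n) = σ_n) = exp(2sθ − v_n θ²/((9/4)a_n⁴)) + o(1), uniformly over all admissible v_n ≤ c a_n⁴. -/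
open Filter

/-- The probability that a simple random walk started at `0` (increments uniform on `{-1,+1}`)
is at position `x` after `m` steps, modelled by counting increment sequences. -/
noncomputable def srwProb (m : ℕ) (x : ℤ) : ℝ :=
  (Nat.card {ε : Fin m → ℤ // (∀ i, ε i = 1 ∨ ε i = -1) ∧ ∑ i, ε i = x} : ℝ) / 2 ^ m

/-! Write `P(u, d)` for the probability of `u` up-steps and `d` down-steps. Deleting one up-step, or
one up-step together with one down-step, multiplies `P` by a rational factor `1 + r`. For a walk of
length `N` ending at `S`, `r` is close to `S / N` in the first case and, since `√n ≪ σ` makes `N`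
negligible against `S ^ 2`, to `-(S / N) ^ 2` in the second. Here `N ≈ 2n` and `S ≈ σ` along the
whole deletion of the `2s_n` up-steps and `v` pairs that separate the two walks, because
`s_n = O(n / σ) = o(σ)` and `v = O((n / σ) ^ 2) = o(n)`. Hence the logarithm of the quotient is
`2s_n (1 + o(1)) σ / (2n) - v (1 + o(1)) (σ / (2n)) ^ 2`. Both terms are bounded, and
`a ^ 2 ∼ (4θ / 3) (n / σ)` turns the first into `2sθ` and the second into
`vθ ^ 2 / ((9 / 4) a ^ 4)`, up to `o(1)`. -/

open Asymptotics Topology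

section Counting

variable {α : Type*} [Fintype α]

/-- Sign vectors correspond to the finset of their down-steps, the coordinates equal to `-1`. -/
def signVectorEquivFinset [DecidableEq α] : {ε : α → ℤ // ∀ i, ε i = 1 ∨ ε i = -1} ≃ Finset α where
  toFun ε := {i | ε.1 i = -1}
  invFun t := ⟨fun i ↦ if i ∈ t then -1 else 1, fun i ↦ by dsimp only; split_ifs <;> simp⟩
  left_inv ε := by
    ext i
    rcases ε.2 i with h | h <;> simp [h]
  right_inv t := by
    ext i
    by_cases h : i ∈ t <;> simp [h]

lemma sum_signVector [DecidableEq α] (ε : {ε : α → ℤ // ∀ i, ε i = 1 ∨ ε i = -1}) :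
    ∑ i, ε.1 i = Fintype.card α - 2 * ((signVectorEquivFinset ε).card : ℤ) := by
  have coord (i : α) : ε.1 i = 1 - 2 * if ε.1 i = -1 then 1 else 0 := by
    rcases ε.2 i with h | h <;> simp [h]
  rw [Finset.sum_congr rfl fun i _ ↦ coord i]
  simp only [Finset.sum_sub_distrib, ← Finset.mul_sum, Finset.sum_boole]
  simp [signVectorEquivFinset]

lemma card_signVector_sum_eq (d : ℕ) :
    Nat.card {ε : α → ℤ // (∀ i, ε i = 1 ∨ ε i = -1) ∧ ∑ i, ε i = Fintype.card α - 2 * (d : ℤ)} =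
      (Fintype.card α).choose d := by
  classical
  have e : {ε : α → ℤ // (∀ i, ε i = 1 ∨ ε i = -1) ∧ ∑ i, ε i = Fintype.card α - 2 * (d : ℤ)} ≃
      {t : Finset α // t.card = d} :=
    (Equiv.subtypeSubtypeEquivSubtypeInter _ _).symm.trans <|
      signVectorEquivFinset.subtypeEquiv fun ε ↦ by rw [sum_signVector]; omega
  rw [Nat.card_congr e, Nat.card_eq_fintype_card, Fintype.card_finset_len]

end Counting

/-- The probability that `u + d` fair coin flips give `u` up-steps and `d` down-steps. It
reparametrizes `srwProb`, whose arguments are the number of steps `u + d` and the endpoint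
`u - d`. -/
noncomputable def upDownProb (u d : ℕ) : ℝ :=
  (u + d).choose d / 2 ^ (u + d)

lemma srwProb_eq_upDownProb {m u d : ℕ} {x : ℤ} (hm : m = u + d) (hx : x = u - d) :
    srwProb m x = upDownProb u d := by
  have endpoint : x = Fintype.card (Fin m) - 2 * (d : ℤ) := by rw [Fintype.card_fin]; omega
  rw [srwProb, endpoint, card_signVector_sum_eq, Fintype.card_fin, hm, upDownProb]

lemma upDownProb_pos (u d : ℕ) : 0 < upDownProb u d := by
  have : 0 < (u + d).choose d := Nat.choose_pos (Nat.le_add_left d u)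
  unfold upDownProb
  positivity

lemma upDownProb_eq_succ_left_mul (u d : ℕ) :
    upDownProb u d =
      upDownProb (u + 1) d * (1 + (u + 1 - d : ℝ) / (u + 1 + d)) := by
  have choose_rec : ((u + d).choose d : ℝ) * (u + d + 1) = (u + d + 1).choose d * (u + 1) := by
    have := Nat.choose_mul_succ_eq (u + d) d
    rw [show u + d + 1 - d = u + 1 by omega] at this
    exact_mod_cast this
  rw [upDownProb, upDownProb, Nat.add_right_comm, pow_succ]
  field_simp
  linear_combination 2 * choose_rec

lemma upDownProb_comm (u d : ℕ) : upDownProb u d = upDownProb d u := by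
  rw [upDownProb, upDownProb, add_comm d u, Nat.choose_symm_add]

lemma upDownProb_eq_succ_succ_mul (u d : ℕ) :
    upDownProb u d = upDownProb (u + 1) (d + 1) *
      (1 + ((u + 1 + (d + 1)) - ((u + 1) - (d + 1)) ^ 2 : ℝ) /
        ((u + 1 + (d + 1)) ^ 2 - (u + 1 + (d + 1)))) := by
  have denom : ((u + 1 + (d + 1)) ^ 2 - (u + 1 + (d + 1)) : ℝ) = (u + d + 2) * (u + d + 1) := by
    ring
  rw [upDownProb_eq_succ_left_mul u d, upDownProb_comm (u + 1) d,
    upDownProb_eq_succ_left_mul d (u + 1), upDownProb_comm (d + 1), denom, mul_assoc]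
  congr 1
  push_cast
  field_simp
  ring

section Asymptotics

variable {ι : Type*} {l : Filter ι}

/-- The choice `y x` is a point of `S x` at which `P x` fails, if there is one. -/
lemma eventually_forall_mem_of_forall_choice {β : Type*} {S : ι → Set β} {P : ι → β → Prop}
    (hS : ∀ x, (S x).Nonempty) (h : ∀ y : ι → β, (∀ x, y x ∈ S x) → ∀ᶠ x in l, P x (y x)) :
    ∀ᶠ x in l, ∀ y ∈ S x, P x y := by
  have worst (x : ι) : ∃ y ∈ S x, P x y → ∀ z ∈ S x, P x z := by
    by_cases hx : ∀ z ∈ S x, P x z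
    · exact (hS x).imp fun y hy ↦ ⟨hy, fun _ ↦ hx⟩
    · push Not at hx
      exact hx.imp fun y hy ↦ ⟨hy.1, fun hP ↦ absurd hP hy.2⟩
  choose y hyS hy using worst
  exact (h y hyS).mono hy

lemma isEquivalent_sum_range {f : ι → ℕ → ℝ} {g : ι → ℝ} {k : ι → ℕ}
    (h : ∀ i : ι → ℕ, i ≤ k → (fun x ↦ f x (i x)) ~[l] g) :
    (fun x ↦ ∑ i ∈ Finset.range (k x), f x (i + 1)) ~[l] fun x ↦ k x * g x := by
  refine IsLittleO.of_bound fun c hc ↦ ?_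
  have uniform : ∀ᶠ x in l, ∀ i ∈ Set.Iic (k x), ‖f x i - g x‖ ≤ c * ‖g x‖ :=
    eventually_forall_mem_of_forall_choice (fun x ↦ ⟨k x, Set.self_mem_Iic⟩)
      fun i hi ↦ (h i hi).isLittleO.bound hc
  filter_upwards [uniform] with x hx
  calc ‖∑ i ∈ Finset.range (k x), f x (i + 1) - k x * g x‖
      = ‖∑ i ∈ Finset.range (k x), (f x (i + 1) - g x)‖ := by simp
    _ ≤ ∑ _ ∈ Finset.range (k x), c * ‖g x‖ :=
      norm_sum_le_of_le _ fun i hi ↦ hx (i + 1) (Finset.mem_range.1 hi)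
    _ = c * ‖k x * g x‖ := by
      rw [Finset.sum_const, Finset.card_range, nsmul_eq_mul, norm_mul, Real.norm_natCast]
      ring

lemma tendsto_exp_sub_exp {f g : ι → ℝ} (hg : IsBoundedUnder (· ≤ ·) l g)
    (hfg : Tendsto (fun x ↦ f x - g x) l (𝓝 0)) :
    Tendsto (fun x ↦ Real.exp (f x) - Real.exp (g x)) l (𝓝 0) := by
  have bounded : (fun x ↦ Real.exp (g x)) =O[l] fun _ ↦ (1 : ℝ) := Real.isBigO_exp_comp_one.2 hg
  have small : Tendsto (fun x ↦ Real.exp (f x - g x) - 1) l (𝓝 0) := by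
    simpa using (Real.continuous_exp.tendsto _).comp hfg |>.sub_const 1
  refine (isLittleO_one_iff ℝ).1 ?_
  refine (bounded.mul_isLittleO ((isLittleO_one_iff ℝ).2 small)).congr (fun x ↦ ?_)
    fun _ ↦ mul_one 1
  rw [mul_sub_one, ← Real.exp_add, add_sub_cancel]

lemma tendsto_sub_exp_of_tendsto_log_sub {r g : ι → ℝ} (hr : ∀ x, 0 < r x)
    (hg : IsBoundedUnder (· ≤ ·) l g) (h : Tendsto (fun x ↦ Real.log (r x) - g x) l (𝓝 0)) :
    Tendsto (fun x ↦ r x - Real.exp (g x)) l (𝓝 0) := by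
  simpa only [Real.exp_log (hr _)] using tendsto_exp_sub_exp hg h

lemma isBigO_div_one {f g : ι → ℝ} (h : f =O[l] g) : (fun x ↦ f x / g x) =O[l] fun _ ↦ (1 : ℝ) :=
  (h.mul (isBigO_refl (fun x ↦ (g x)⁻¹) l)).trans <| isBigO_of_le l fun x ↦ by
    rw [norm_mul, norm_inv, norm_one]
    exact mul_inv_le_one

lemma tendsto_div_sub_div {f g w : ι → ℝ} (hfg : f ~[l] g) (hw : w =O[l] g) :
    Tendsto (fun x ↦ w x / f x - w x / g x) l (𝓝 0) := by
  refine (isLittleO_one_iff ℝ).1 <|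
    ((hw.mul_isLittleO hfg.inv.isLittleO).trans_isBigO ?_).congr_left fun x ↦ ?_
  · exact isBigO_div_one (isBigO_refl g l)
  · simp only [Pi.sub_apply, Pi.inv_apply]
    ring

lemma tendsto_div_atTop_of_isLittleO {f g : ι → ℝ} (hfg : f =o[l] g)
    (hf : ∀ x, 0 < f x) (hg : ∀ x, 0 ≤ g x) : Tendsto (fun x ↦ g x / f x) l atTop := by
  have ratio_pos : ∀ᶠ x in l, 0 < f x / g x := hfg.isBigO.eq_zero_imp.mono fun x hx ↦
    div_pos (hf x) ((hg x).lt_of_ne' (mt hx (hf x).ne'))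
  exact (tendsto_nhdsWithin_iff.2
    ⟨hfg.tendsto_div_nhds_zero, ratio_pos⟩).inv_tendsto_nhdsGT_zero.congr fun _ ↦ inv_div _ _

lemma isLittleO_sq_of_tendsto_sqrt_div {f g : ι → ℝ} (hf : ∀ x, 0 ≤ f x) (hg : ∀ x, g x ≠ 0)
    (h : Tendsto (fun x ↦ √(f x) / g x) l (𝓝 0)) : f =o[l] fun x ↦ g x ^ 2 :=
  (((isLittleO_iff_tendsto fun x hx ↦ absurd hx (hg x)).2 h).pow two_pos).congr_left
    fun x ↦ Real.sq_sqrt (hf x)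

lemma isEquivalent_const_mul {f g : ι → ℝ} (A : ℝ) (hfg : f ~[l] g) :
    (fun x ↦ A * f x) ~[l] fun x ↦ A * g x :=
  (IsEquivalent.refl (u := fun _ ↦ A)).mul hfg

lemma isEquivalent_sq_of_tendsto_div_two_mul_sqrt {f q : ι → ℝ}
    (h : Tendsto (fun x ↦ f x / (2 * √(q x))) l (𝓝 1)) :
    (fun x ↦ f x ^ 2) ~[l] fun x ↦ 4 * q x := by
  have q_pos : ∀ᶠ x in l, 0 < q x := by
    filter_upwards [h.eventually_ne one_ne_zero] with x hx
    contrapose! hx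
    simp [Real.sqrt_eq_zero_of_nonpos hx]
  refine ((isEquivalent_of_tendsto_one h).pow 2).congr_right (q_pos.mono fun x hx ↦ ?_)
  simp only [Pi.pow_apply, mul_pow, Real.sq_sqrt hx.le]
  norm_num

lemma isEquivalent_const_mul_pow {A : ℝ} {f g : ι → ℝ} (hA : A ≠ 0)
    (hfg : f ~[l] fun x ↦ A * g x) (C : ℝ) (k : ℕ) :
    (fun x ↦ (C * g x) ^ k) ~[l] fun x ↦ (C / A) ^ k * f x ^ k := by
  refine (((isEquivalent_const_mul (C / A) hfg.symm).pow k).congr_left (.of_eq ?_)).congr_right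
    (.of_eq ?_) <;> ext x
  · rw [Pi.pow_apply, ← mul_assoc, div_mul_cancel₀ C hA]
  · exact mul_pow _ _ k

lemma tendsto_mul_div_of_isEquivalent {A : ℝ} {f g h : ι → ℝ} (hg : ∀ᶠ x in l, g x ≠ 0)
    (hgh : g =o[l] h) (hf : f ~[l] fun x ↦ A * (h x / g x)) :
    Tendsto (fun x ↦ f x * (g x / h x)) l (𝓝 A) := by
  refine ((hf.mul IsEquivalent.refl).congr_right ?_).tendsto_const
  filter_upwards [hg, hgh.isBigO.eq_zero_imp] with x hgx hhx
  have h_ne_zero : h x ≠ 0 := mt hhx hgx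
  simp only [Pi.mul_apply, Function.const_apply]
  field_simp

lemma isLittleO_div_of_isLittleO_sq {f g : ι → ℝ} (h : f =o[l] fun x ↦ g x ^ 2) :
    (fun x ↦ f x / g x) =o[l] g :=
  (h.mul_isBigO (isBigO_refl (fun x ↦ (g x)⁻¹) l)).congr (fun _ ↦ rfl) fun x ↦ by
    rw [sq, mul_self_mul_inv]

lemma isLittleO_div_sq_of_isLittleO_sq {f g : ι → ℝ} (h : f =o[l] fun x ↦ g x ^ 2) :
    (fun x ↦ (f x / g x) ^ 2) =o[l] f :=
  ((isBigO_refl f l).mul_isLittleO ((isLittleO_one_iff ℝ).2 h.tendsto_div_nhds_zero)).congr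
    (fun x ↦ by ring) fun x ↦ mul_one (f x)

lemma eventually_le_of_isLittleO {k m : ι → ℕ}
    (h : (fun x ↦ (k x : ℝ)) =o[l] fun x ↦ (m x : ℝ)) : ∀ᶠ x in l, k x ≤ m x :=
  (h.bound one_pos).mono fun x hx ↦ by simpa using hx

lemma isEquivalent_natCast_sub {k m : ι → ℕ}
    (h : (fun x ↦ (k x : ℝ)) =o[l] fun x ↦ (m x : ℝ)) :
    (fun x ↦ ((m x - k x : ℕ) : ℝ)) ~[l] fun x ↦ (m x : ℝ) :=
  (IsEquivalent.refl.sub_isLittleO h).congr_left <|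
    (eventually_le_of_isLittleO h).mono fun _ hx ↦ (Nat.cast_sub hx).symm

lemma isEquivalent_add_add_self {d k : ι → ℕ} {N : ι → ℝ}
    (hd : (fun x ↦ (d x : ℝ)) ~[l] N) (hk : (fun x ↦ (k x : ℝ)) =o[l] N) :
    (fun x ↦ ((d x + k x : ℕ) + d x : ℝ)) ~[l] fun x ↦ 2 * N x := by
  refine ((isEquivalent_const_mul 2 hd).add_isLittleO
    (hk.const_mul_right two_ne_zero)).congr_left (.of_eq ?_)
  ext x
  simp only [Pi.add_apply]
  push_cast
  ring

lemma isEquivalent_natFloor_const_mul {A B : ℝ} {f g : ι → ℝ} (hAB : 0 < A * B)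
    (hfg : f ~[l] fun x ↦ B * g x) (hg : Tendsto g l atTop) :
    (fun x ↦ (⌊A * f x⌋₊ : ℝ)) ~[l] fun x ↦ A * B * g x := by
  have argument : (fun x ↦ A * f x) ~[l] fun x ↦ A * B * g x :=
    (isEquivalent_const_mul A hfg).congr_right (.of_eq (by ext x; ring))
  exact (isEquivalent_nat_floor (R := ℝ).comp_tendsto
    (argument.symm.tendsto_atTop (hg.const_mul_atTop hAB))).trans argument

lemma isBigO_of_natCast_le_mul {c : ℝ} {k : ι → ℕ} {f : ι → ℝ} (h : ∀ x, (k x : ℝ) ≤ c * f x) :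
    (fun x ↦ (k x : ℝ)) =O[l] f :=
  (isBigO_of_le l fun x ↦ by
    simpa only [Real.norm_natCast] using (h x).trans (Real.le_norm_self _)).trans
    (isBigO_const_mul_self c f l)

lemma isEquivalent_log_one_add {f : ι → ℝ} (hf : Tendsto f l (𝓝 0)) :
    (fun x ↦ Real.log (1 + f x)) ~[l] f := by
  have := hasDerivAt_iff_isLittleO_nhds_zero.1 (Real.hasDerivAt_log one_ne_zero)
  simp only [Real.log_one, sub_zero, inv_one, smul_eq_mul, mul_one] at this
  exact this.comp_tendsto hf

lemma isEquivalent_log_sub_log {p r : ι → ℕ → ℝ} {g : ι → ℝ} {k : ι → ℕ}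
    (hp : ∀ x i, 0 < p x i) (hpr : ∀ x i, p x i = p x (i + 1) * (1 + r x (i + 1)))
    (hr : ∀ i : ι → ℕ, i ≤ k → (fun x ↦ r x (i x)) ~[l] g) (hg : Tendsto g l (𝓝 0)) :
    (fun x ↦ Real.log (p x 0) - Real.log (p x (k x))) ~[l] fun x ↦ k x * g x := by
  have step (x : ι) (i : ℕ) :
      Real.log (p x i) - Real.log (p x (i + 1)) = Real.log (1 + r x (i + 1)) := by
    have ne_zero := (hpr x i ▸ hp x i).ne'
    rw [hpr, Real.log_mul (left_ne_zero_of_mul ne_zero) (right_ne_zero_of_mul ne_zero),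
      add_sub_cancel_left]
  have telescope (x : ι) : Real.log (p x 0) - Real.log (p x (k x)) =
      ∑ i ∈ Finset.range (k x), Real.log (1 + r x (i + 1)) := by
    simp only [← step, Finset.sum_range_sub' fun i ↦ Real.log (p x i)]
  simp only [telescope]
  exact isEquivalent_sum_range (f := fun x i ↦ Real.log (1 + r x i)) fun i hi ↦
    (isEquivalent_log_one_add ((hr i hi).symm.tendsto_nhds hg)).trans (hr i hi)

section LogRatio

variable {u d k : ι → ℕ} {S N : ι → ℝ}

lemma isEquivalent_log_upDownProb_sub_log_add_left
    (hS : (fun x ↦ (u x - d x : ℝ)) ~[l] S) (hN : (fun x ↦ (u x + d x : ℝ)) ~[l] N)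
    (hSN : S =o[l] N) (hk : (fun x ↦ (k x : ℝ)) =o[l] S) :
    (fun x ↦ Real.log (upDownProb (u x) (d x)) - Real.log (upDownProb (u x + k x) (d x))) ~[l]
      fun x ↦ k x * (S x / N x) := by
  refine isEquivalent_log_sub_log (p := fun x i ↦ upDownProb (u x + i) (d x))
    (r := fun x i ↦ (u x + i - d x) / (u x + i + d x)) (fun _ _ ↦ upDownProb_pos _ _)
    (fun x i ↦ ?_) (fun i hi ↦ ?_) hSN.tendsto_div_nhds_zero
  · rw [upDownProb_eq_succ_left_mul]
    push_cast
    simp only [add_assoc]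
  · have hiS : (fun x ↦ (i x : ℝ)) =o[l] S :=
      (isBigO_of_le l fun x ↦ by simpa using hi x).trans_isLittleO hk
    refine ((hS.add_isLittleO hiS).div (hN.add_isLittleO (hiS.trans hSN))).congr_left (.of_eq ?_)
    ext x
    simp only [Pi.add_apply, Pi.div_apply]
    ring_nf

lemma isEquivalent_log_upDownProb_sub_log_add_add
    (hS : (fun x ↦ (u x - d x : ℝ)) ~[l] S) (hN : (fun x ↦ (u x + d x : ℝ)) ~[l] N)
    (hSN : S =o[l] N) (hNS : N =o[l] fun x ↦ S x ^ 2) (hk : (fun x ↦ (k x : ℝ)) =o[l] N) :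
    (fun x ↦ Real.log (upDownProb (u x) (d x)) -
      Real.log (upDownProb (u x + k x) (d x + k x))) ~[l] fun x ↦ k x * -(S x / N x) ^ 2 := by
  have hSN_zero : Tendsto (fun x ↦ -(S x / N x) ^ 2) l (𝓝 0) := by
    simpa using (hSN.tendsto_div_nhds_zero.pow 2).neg
  refine isEquivalent_log_sub_log (p := fun x i ↦ upDownProb (u x + i) (d x + i))
    (r := fun x i ↦ ((u x + d x + 2 * i) - (u x - d x) ^ 2) /
      ((u x + d x + 2 * i) ^ 2 - (u x + d x + 2 * i))) (fun _ _ ↦ upDownProb_pos _ _)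
    (fun x i ↦ ?_) (fun i hi ↦ ?_) hSN_zero
  · rw [upDownProb_eq_succ_succ_mul]
    push_cast
    ring_nf
  · have hm : (fun x ↦ (u x + d x + 2 * i x : ℝ)) ~[l] N :=
      hN.add_isLittleO <| .const_mul_left
        ((isBigO_of_le l fun x ↦ by simpa using hi x).trans_isLittleO hk) 2
    have num : (fun x ↦ (u x + d x + 2 * i x) - (u x - d x : ℝ) ^ 2) ~[l] fun x ↦ -S x ^ 2 :=
      (hm.isBigO.trans_isLittleO hNS).neg_right.add_isEquivalent (hS.pow 2).neg
    have denom : (fun x ↦ (u x + d x + 2 * i x) ^ 2 - (u x + d x + 2 * i x : ℝ)) ~[l]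
        fun x ↦ N x ^ 2 :=
      (hm.pow 2).sub_isLittleO <| (hm.isBigO.trans_isLittleO hNS).trans (hSN.pow two_pos)
    refine (num.div denom).congr_right (.of_eq ?_)
    ext x
    rw [Pi.div_apply, neg_div, div_pow]

end LogRatio

section Walk

variable {n σ v t : ι → ℕ}

lemma eventually_srwProb_div_eq (hvn : (fun x ↦ (v x : ℝ)) =o[l] fun x ↦ (n x : ℝ))
    (htσ : (fun x ↦ ((2 * t x : ℕ) : ℝ)) =o[l] fun x ↦ (σ x : ℝ)) :
    ∀ᶠ x in l, srwProb (2 * (n x - v x) + σ x - 2 * t x) (σ x - 2 * t x) /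
        srwProb (2 * n x + σ x) (σ x) =
      upDownProb (n x - v x + (σ x - 2 * t x)) (n x - v x) / upDownProb (n x + σ x) (n x) := by
  filter_upwards [eventually_le_of_isLittleO hvn, eventually_le_of_isLittleO htσ] with x hv ht
  congr 1 <;> exact srwProb_eq_upDownProb (by omega) (by omega)

lemma isEquivalent_log_upDownProb_sub_ups
    (hσn : (fun x ↦ (σ x : ℝ)) =o[l] fun x ↦ (n x : ℝ))
    (hvn : (fun x ↦ (v x : ℝ)) =o[l] fun x ↦ (n x : ℝ))
    (htσ : (fun x ↦ ((2 * t x : ℕ) : ℝ)) =o[l] fun x ↦ (σ x : ℝ)) :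
    (fun x ↦ Real.log (upDownProb (n x - v x + (σ x - 2 * t x)) (n x - v x)) -
      Real.log (upDownProb (n x - v x + σ x) (n x - v x))) ~[l] fun x ↦ t x * (σ x / n x) := by
  have excess := isEquivalent_natCast_sub htσ
  have length := isEquivalent_add_add_self (isEquivalent_natCast_sub hvn)
    (excess.trans_isLittleO hσn)
  have key := isEquivalent_log_upDownProb_sub_log_add_left (k := fun x ↦ 2 * t x)
    (excess.congr_left (EventuallyEq.of_eq (by ext x; push_cast; ring))) length
    (hσn.const_mul_right two_ne_zero) htσ
  refine (key.congr_left ?_).congr_right (.of_eq ?_)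
  · filter_upwards [eventually_le_of_isLittleO htσ] with x hx
    rw [add_assoc, Nat.sub_add_cancel hx]
  · ext x
    push_cast
    ring

lemma isEquivalent_log_upDownProb_sub_pairs
    (hσn : (fun x ↦ (σ x : ℝ)) =o[l] fun x ↦ (n x : ℝ))
    (hnσ : (fun x ↦ (n x : ℝ)) =o[l] fun x ↦ (σ x : ℝ) ^ 2)
    (hvn : (fun x ↦ (v x : ℝ)) =o[l] fun x ↦ (n x : ℝ)) :
    (fun x ↦ Real.log (upDownProb (n x - v x + σ x) (n x - v x)) -
      Real.log (upDownProb (n x + σ x) (n x))) ~[l] fun x ↦ -(v x * (σ x / (2 * n x)) ^ 2) := by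
  have excess : (fun x ↦ ((n x - v x + σ x : ℕ) - (n x - v x : ℕ) : ℝ)) ~[l]
      fun x ↦ (σ x : ℝ) := EventuallyEq.isEquivalent (.of_eq (by ext x; push_cast; ring))
  have length := isEquivalent_add_add_self (isEquivalent_natCast_sub hvn) hσn
  have key := isEquivalent_log_upDownProb_sub_log_add_add (k := v) excess length
    (hσn.const_mul_right two_ne_zero) (hnσ.const_mul_left 2) (hvn.const_mul_right two_ne_zero)
  refine (key.congr_left ?_).congr_right (.of_eq ?_)
  · filter_upwards [eventually_le_of_isLittleO hvn] with x hx
    rw [add_right_comm, Nat.sub_add_cancel hx]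
  · ext x
    ring

lemma tendsto_log_upDownProb_sub_pairs {w : ι → ℝ}
    (hσn : (fun x ↦ (σ x : ℝ)) =o[l] fun x ↦ (n x : ℝ))
    (hnσ : (fun x ↦ (n x : ℝ)) =o[l] fun x ↦ (σ x : ℝ) ^ 2)
    (hvn : (fun x ↦ (v x : ℝ)) =o[l] fun x ↦ (n x : ℝ))
    (hw : (fun x ↦ (2 * (n x / σ x) : ℝ) ^ 2) ~[l] w) (hv : (fun x ↦ (v x : ℝ)) =O[l] w) :
    Tendsto (fun x ↦ Real.log (upDownProb (n x - v x + σ x) (n x - v x)) -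
      Real.log (upDownProb (n x + σ x) (n x)) + v x / w x) l (𝓝 0) := by
  have inv_scale (x : ι) : (v x * (σ x / (2 * n x)) ^ 2 : ℝ) = v x / (2 * (n x / σ x)) ^ 2 := by
    rw [← mul_div_assoc, div_eq_mul_inv (v x : ℝ), ← inv_pow, inv_div]
  have equiv := isEquivalent_log_upDownProb_sub_pairs hσn hnσ hvn
  simp only [inv_scale] at equiv
  have error := equiv.isLittleO.trans_isBigO (isBigO_div_one (hv.trans hw.symm.isBigO)).neg_left
  have := ((isLittleO_one_iff ℝ).1 error).sub (tendsto_div_sub_div hw hv)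
  rw [sub_zero] at this
  refine this.congr fun x ↦ ?_
  rw [Pi.sub_apply]
  ring

theorem tendsto_srwProb_div_sub_exp {A : ℝ} {w : ι → ℝ} (hσ : ∀ᶠ x in l, (σ x : ℝ) ≠ 0)
    (hσn : (fun x ↦ (σ x : ℝ)) =o[l] fun x ↦ (n x : ℝ))
    (hnσ : (fun x ↦ (n x : ℝ)) =o[l] fun x ↦ (σ x : ℝ) ^ 2)
    (ht : (fun x ↦ (t x : ℝ)) ~[l] fun x ↦ A * (n x / σ x))
    (hw : (fun x ↦ (2 * (n x / σ x) : ℝ) ^ 2) ~[l] w) (hv : (fun x ↦ (v x : ℝ)) =O[l] w) :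
    Tendsto (fun x ↦ srwProb (2 * (n x - v x) + σ x - 2 * t x) (σ x - 2 * t x) /
        srwProb (2 * n x + σ x) (σ x) - Real.exp (A - v x / w x)) l (𝓝 0) := by
  have htσ : (fun x ↦ ((2 * t x : ℕ) : ℝ)) =o[l] fun x ↦ (σ x : ℝ) := by
    simpa using ((ht.isBigO.trans (isBigO_const_mul_self _ _ _)).trans_isLittleO
      (isLittleO_div_of_isLittleO_sq hnσ)).const_mul_left 2
  have hvn : (fun x ↦ (v x : ℝ)) =o[l] fun x ↦ (n x : ℝ) :=
    (hv.trans hw.symm.isBigO).trans_isLittleO <| by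
      simpa only [mul_pow] using (isLittleO_div_sq_of_isLittleO_sq hnσ).const_mul_left (2 ^ 2)
  have ups := (isEquivalent_log_upDownProb_sub_ups hσn hvn htσ).tendsto_nhds_iff.2
    (tendsto_mul_div_of_isEquivalent hσ hσn ht)
  have pairs := tendsto_log_upDownProb_sub_pairs hσn hnσ hvn hw hv
  have exponent_bounded : IsBoundedUnder (· ≤ ·) l fun x ↦ A - v x / w x :=
    (isBoundedUnder_le_abs.1
      ((isBigO_const_const A one_ne_zero l).sub (isBigO_div_one hv)).isBoundedUnder_le).1
  refine (tendsto_sub_exp_of_tendsto_log_sub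
    (fun x ↦ div_pos (upDownProb_pos (n x - v x + (σ x - 2 * t x)) (n x - v x))
      (upDownProb_pos (n x + σ x) (n x))) exponent_bounded ?_).congr' ?_
  · simpa only [add_zero, sub_self] using ((ups.add pairs).sub_const A).congr fun x ↦ by
      rw [Real.log_div (upDownProb_pos _ _).ne' (upDownProb_pos _ _).ne']
      ring
  · filter_upwards [eventually_srwProb_div_eq hvn htσ] with x hx
    rw [hx]

end Walk

end Asymptotics

/-- Radon–Nikodym limit for conditioned random-walk counts: if `√n ≪ σ_n ≪ n` and
`a_n ∼ 2√(θn/(3σ_n))` for some `θ > 0`, `s_n = ⌊(3/2) s a_n²⌋` for fixed `s > 0`, then uniformly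
over `v ≤ c a_n⁴`, with `x_n = σ_n - 2s_n` and `y_n = 2(n-v) + σ_n - 2s_n`,
`P(S(y_n) = x_n)/P(S(2n+σ_n) = σ_n) = exp(2sθ - vθ²/((9/4)a_n⁴)) + o(1)`. -/
theorem conditioned_walk_rn_limit (θ s c : ℝ) (hθ : 0 < θ) (hs : 0 < s) (hc : 0 < c)
    (σ : ℕ → ℕ) (a : ℕ → ℝ) (hpos : ∀ n, 0 < σ n)
    (h1 : Tendsto (fun n : ℕ => Real.sqrt n / (σ n : ℝ)) atTop (nhds 0))
    (h2 : Tendsto (fun n : ℕ => (σ n : ℝ) / n) atTop (nhds 0))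
    (h3 : Tendsto (fun n : ℕ => a n / (2 * Real.sqrt (θ * n / (3 * σ n)))) atTop (nhds 1)) :
    ∀ ε : ℝ, 0 < ε → ∀ᶠ n in atTop, ∀ v : ℕ, (v : ℝ) ≤ c * a n ^ 4 →
      |srwProb (2 * (n - v) + σ n - 2 * ⌊3 / 2 * s * a n ^ 2⌋₊)
            ((σ n : ℤ) - 2 * (⌊3 / 2 * s * a n ^ 2⌋₊ : ℤ))
          / srwProb (2 * n + σ n) (σ n : ℤ)
        - Real.exp (2 * s * θ - v * θ ^ 2 / (9 / 4 * a n ^ 4))| ≤ ε := by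
  intro ε hε
  have hσ (n : ℕ) : (σ n : ℝ) ≠ 0 := Nat.cast_ne_zero.2 (hpos n).ne'
  have hσn : (fun n ↦ (σ n : ℝ)) =o[atTop] fun n : ℕ ↦ (n : ℝ) :=
    isLittleO_of_tendsto' ((eventually_ne_atTop 0).mono fun n hn h ↦ absurd (mod_cast h) hn) h2
  have hnσ : (fun n : ℕ ↦ (n : ℝ)) =o[atTop] fun n ↦ (σ n : ℝ) ^ 2 :=
    isLittleO_sq_of_tendsto_sqrt_div (fun n ↦ n.cast_nonneg) hσ h1
  have hρ := tendsto_div_atTop_of_isLittleO hσn (fun n ↦ Nat.cast_pos.2 (hpos n))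
    fun n ↦ n.cast_nonneg
  have ha : (fun n ↦ a n ^ 2) ~[atTop] fun n : ℕ ↦ 4 * θ / 3 * (n / σ n : ℝ) :=
    (isEquivalent_sq_of_tendsto_div_two_mul_sqrt h3).congr_right (.of_eq (by ext n; ring))
  have hA : 3 / 2 * s * (4 * θ / 3) = 2 * s * θ := by ring
  have ht := isEquivalent_natFloor_const_mul (by positivity : 0 < 3 / 2 * s * (4 * θ / 3)) ha hρ
  have hw := isEquivalent_const_mul_pow (by positivity) ha 2 2
  refine eventually_forall_mem_of_forall_choice (S := fun n ↦ {v : ℕ | (v : ℝ) ≤ c * a n ^ 4})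
    (fun n ↦ ⟨0, by simpa using by positivity⟩) fun v hv ↦ ?_
  have hvw : (fun n ↦ (v n : ℝ)) =O[atTop] fun n ↦ (2 / (4 * θ / 3)) ^ 2 * (a n ^ 2) ^ 2 :=
    (isBigO_of_natCast_le_mul fun n ↦ by simpa [← pow_mul] using hv n).trans
      (isBigO_self_const_mul (by positivity) _ _)
  have key := tendsto_srwProb_div_sub_exp (.of_forall hσ) hσn hnσ ht hw hvw
  filter_upwards [Metric.tendsto_nhds.1 key ε hε] with n hn
  have scale : (2 / (4 * θ / 3)) ^ 2 * (a n ^ 2) ^ 2 = 9 / 4 * a n ^ 4 / θ ^ 2 := by ring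
  rw [hA, scale, div_div_eq_mul_div, dist_zero_right] at hn
  exact hn.le
end
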